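/- Let r ≥ 0 be a real number, let x : ℕ → ℝ satisfy x t ≥ 0 for all t, and let s : ℕ → ℝ satisfy 0 ≤ s t ≤ 1 for all t. Suppose x (t+1) ≥ x t + r − s t for all t ≥ 1. If limsup_{T→∞} (1/T) ∑_{t=1}^{T} x t < ∞, then liminf_{T→∞} (1/T) ∑_{t=1}^{T} s t ≥ r. (Deterministic core of Proposition 2: if a queue whose size can decrease by at most the served amount per frame has bounded time-average size, then its long-run service rate, defined with liminf, is at least its arrival rate.) -/

import Mathlib

/-- Deterministic core of Proposition 2: if a queue whose size can decrease by
at most the served amount per frame has bounded time-average size, then its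
long-run service rate (defined with liminf) is at least its arrival rate. -/
theorem stmt_3 (r : ℝ) (hr : 0 ≤ r) (x s : ℕ → ℝ)
    (hx : ∀ t, 0 ≤ x t) (hs : ∀ t, 0 ≤ s t ∧ s t ≤ 1)
    (hdyn : ∀ t ≥ 1, x (t + 1) ≥ x t + r - s t)
    (hstable : Filter.limsup
      (fun T : ℕ => (((1 : ℝ) / T * ∑ t ∈ Finset.Icc 1 T, x t : ℝ) : EReal))
      Filter.atTop < ⊤) :
    r ≤ Filter.liminf
      (fun T : ℕ => (1 : ℝ) / T * ∑ t ∈ Finset.Icc 1 T, s t) Filter.atTop := by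
  have hlow : ∀ T : ℕ, r * T - ∑ t ∈ Finset.Icc 1 T, s t ≤ x (T + 1) := by
    intro T
    induction T with
    | zero => simpa using hx 1
    | succ n ih =>
      rw [Finset.sum_Icc_succ_top (by omega)]
      have := hdyn (n + 1) (by omega)
      push_cast
      linarith
  have hdec : ∀ T k : ℕ, x (T + 1) - k ≤ x (T + 1 + k) := by
    intro T k
    induction k with
    | zero => simp
    | succ n ih =>
      have := hdyn (T + 1 + n) (by omega)
      have h2 := (hs (T + 1 + n)).2
      rw [← add_assoc]
      push_cast
      linarith
  have hsum : ∀ (T K : ℕ) (c : ℝ), (∀ j < K, c ≤ x (T + 1 + j)) →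
      K * c ≤ ∑ t ∈ Finset.Icc 1 (T + K), x t := by
    intro T K c
    induction K with
    | zero =>
      intro _
      simpa using Finset.sum_nonneg (fun i _ => hx i)
    | succ n ih =>
      intro h
      have h1 := ih (fun j hj => h j (by omega))
      have h2 := h n (by omega)
      rw [← add_assoc, Finset.sum_Icc_succ_top (by omega)]
      rw [show T + n + 1 = T + 1 + n by omega]
      push_cast
      linarith
  obtain ⟨B, hB, -⟩ := EReal.lt_iff_exists_real_btwn.1 hstable
  have hev := Filter.eventually_lt_of_limsup_lt hB
  obtain ⟨N, hN⟩ := Filter.eventually_atTop.1 hev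
  have hbd : Filter.IsBoundedUnder (· ≤ ·) Filter.atTop
      (fun T : ℕ => (1 : ℝ) / T * ∑ t ∈ Finset.Icc 1 T, s t) := by
    refine Filter.isBoundedUnder_of ⟨1, fun T => ?_⟩
    have h : ∑ t ∈ Finset.Icc 1 T, s t ≤ T := by
      have := Finset.sum_le_sum (s := Finset.Icc 1 T) (fun i _ => (hs i).2)
      simpa using this
    rw [one_div_mul_eq_div]
    exact div_le_one_of_le₀ h (by positivity)
  refine le_of_forall_lt_imp_le_of_dense fun b hb => ?_
  refine Filter.le_liminf_of_le hbd.isCoboundedUnder_ge ?_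
  obtain ⟨ε, hε, rfl⟩ : ∃ ε > 0, b = r - ε := ⟨r - b, by linarith, by ring⟩
  obtain ⟨M, hM⟩ := exists_nat_gt ((B * (1 + ε / 2) / (ε / 2) + 1) / (ε / 2))
  filter_upwards [Filter.eventually_ge_atTop (N + M + 1)] with T hT
  by_contra hcon
  push Not at hcon
  have hTpos : (0 : ℝ) < T := by exact_mod_cast (by omega : 0 < T)
  rw [one_div_mul_eq_div, div_lt_iff₀ hTpos] at hcon
  have hxT := hlow T
  have hK1 : (⌊ε * T / 2⌋₊ : ℝ) ≤ ε * T / 2 := Nat.floor_le (by positivity)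
  have hK2 := Nat.lt_floor_add_one (ε * T / 2)
  set K := ⌊ε * T / 2⌋₊
  have h1 := hsum T K (ε * T / 2) (by
    intro j hj
    have h := hdec T j
    have hj' : (j : ℝ) < K := by exact_mod_cast hj
    nlinarith)
  have h2 := hN (T + K) (by omega)
  have h2' := EReal.coe_lt_coe_iff.1 h2
  have hKn : (0 : ℝ) ≤ K := by positivity
  rw [one_div_mul_eq_div, div_lt_iff₀ (by push_cast; positivity)] at h2'
  push_cast at h2'
  have hMT : (M : ℝ) < T := by exact_mod_cast (by omega : M < T)
  have h3 := hM.trans hMT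
  rw [div_lt_iff₀ (by positivity), ← lt_sub_iff_add_lt, div_lt_iff₀ (by positivity)] at h3
  have hBpos : 0 < B := by
    by_contra hb0
    push Not at hb0
    have : 0 ≤ (K : ℝ) * (ε * T / 2) := by positivity
    nlinarith
  have h4 : B * (T + K) ≤ T * (B * (1 + ε / 2)) := by nlinarith
  have h5 : T * (B * (1 + ε / 2)) < T * (K * (ε / 2)) := by
    apply mul_lt_mul_of_pos_left _ hTpos
    nlinarith
  nlinarith
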